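/- Let p > 3 be a prime, F an algebraically closed field of characteristic p, and m ≥ 1. Let B_m = F[X_1, …, X_m]/(X_1^p, …, X_m^p) and W(m,1) = Der_F(B_m) the Witt algebra. Then W(m,1) is generated by one and a half elements — that is, for every nonzero x ∈ W(m,1) there exists y ∈ W(m,1) such that the smallest Lie subalgebra containing x and y is W(m,1) — if and only if m = 1. -/

import Mathlib

open MvPolynomial

set_option synthInstance.maxHeartbeats 1000000
set_option maxHeartbeats 1000000

/-- The truncated polynomial algebra `B_m = F[X_1, …, X_m]/(X_1^p, …, X_m^p)`. -/
noncomputable abbrev TruncPoly (F : Type) [Field F] (p m : ℕ) : Type :=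
  MvPolynomial (Fin m) F ⧸
    Ideal.span (Set.range fun i : Fin m => (X i : MvPolynomial (Fin m) F) ^ p)

/-!
Let `m ≥ 2`, and let `f = ∏ X_i ^ (p - 1)` span the socle of `B_m`. The derivation `x = f ∂/∂X_i`
has no partner `y`. Write `ε` for evaluation at the origin, so that `f b = ε(b) f`, and consider
the largest `y`-stable ideal `I` inside `ker ε`. If `I ≠ 0`, then `f ∈ I`, so `I` is stable under
both `x` and `y`; but no proper nonzero ideal is stable under all derivations. If `I = 0`, then
every linear functional on `B_m` has the form `ε ∘ q(y)` for a polynomial `q`. Writing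
`ε ∘ ∂/∂X_i = ε ∘ D` with `D = q(y)`, the vanishing of `I` forces `D` to be a derivation. Then
`x = f D` with `⁅y, D⁆ = 0`, so `x` and `y` lie in the Lie algebra `F y + B_m D`, which is too small
to contain two independent directions.

For `m = 1`, the derivation `q ∂/∂X` is encoded by the polynomial `q`, the bracket becoming the
Wronskian. Up to scaling, a partner of `b` modulo `X ^ p` is `X ^ (p - 1)` if `b(0) ≠ 0`, `1` if
`deg b ≥ 3`, `1 + X ^ (p - 1)` if `b = X ^ 2`, and `(1 + c X) ^ 2 + X ^ (p - 1)` if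
`b = X + c X ^ 2`.
-/

open scoped Polynomial

section WronskianClosedSubmodules

/-- Submodules of `F[X]` arising as preimages of Lie subalgebras of `W(1,1)` under the map
`q ↦ q∂`: the Lie bracket of `W(1,1)` is the Wronskian, and `X ^ p` acts as zero. -/
structure IsWittSubmodule {F : Type*} [Field F] (p : ℕ) (S : Submodule F F[X]) : Prop where
  X_pow_mul_mem : ∀ q, Polynomial.X ^ p * q ∈ S
  wronskian_mem : ∀ {q r}, q ∈ S → r ∈ S → Polynomial.wronskian q r ∈ S

variable {F : Type*} [Field F] {p : ℕ} {S : Submodule F F[X]}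

lemma natCast_ne_zero_of_lt_char {R : Type*} [AddMonoidWithOne R] {p n : ℕ} [CharP R p]
    (hn : n ≠ 0) (hnp : n < p) : (n : R) ≠ 0 :=
  (CharP.cast_eq_zero_iff R p n).not.mpr (Nat.not_dvd_of_pos_of_lt (Nat.pos_of_ne_zero hn) hnp)

lemma X_mul_derivative_X_pow {R : Type*} [CommSemiring R] (n : ℕ) :
    Polynomial.X * Polynomial.derivative (Polynomial.X ^ n) = (n : R[X]) * Polynomial.X ^ n := by
  rcases n with _ | n
  · simp
  · rw [Polynomial.derivative_X_pow, Polynomial.C_eq_natCast, Nat.add_sub_cancel]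
    ring

lemma X_mul_derivative_X_pow_sub_one {R : Type*} [CommRing R] {p : ℕ} [CharP R p]
    (hp : p ≠ 0) :
    Polynomial.X * Polynomial.derivative (Polynomial.X ^ (p - 1))
      = -(Polynomial.X ^ (p - 1) : R[X]) := by
  rw [X_mul_derivative_X_pow, Nat.cast_pred (Nat.pos_of_ne_zero hp), CharP.cast_eq_zero, zero_sub,
    neg_one_mul]

lemma wronskian_X_sq_X_pow {R : Type*} [CommRing R] (n : ℕ) :
    Polynomial.wronskian (Polynomial.X ^ 2 : R[X]) (Polynomial.X ^ n)
      = ((n : R) - 2) • Polynomial.X ^ (n + 1) := by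
  rw [Polynomial.wronskian, Polynomial.derivative_X_sq, Polynomial.smul_eq_C_mul, map_sub,
    Polynomial.C_eq_natCast]
  linear_combination Polynomial.X * X_mul_derivative_X_pow (R := R) n

lemma X_pow_mul_mem_of_X_pow_mem {n : ℕ} (hn : Polynomial.X ^ n ∈ S)
    (h : ∀ q, Polynomial.X ^ (n + 1) * q ∈ S) (q : F[X]) : Polynomial.X ^ n * q ∈ S := by
  have hq : Polynomial.X ^ n * q
      = Polynomial.X ^ (n + 1) * q.divX + q.coeff 0 • Polynomial.X ^ n := by
    rw [Polynomial.smul_eq_C_mul]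
    linear_combination -Polynomial.X ^ n * q.divX_mul_X_add
  exact hq ▸ S.add_mem (h _) (S.smul_mem _ hn)

lemma degreeLT_succ_le_of_mem {n : ℕ} {q : F[X]} (hS : Polynomial.degreeLT F n ≤ S) (hq : q ∈ S)
    (hqn : q.natDegree = n) (hq0 : q ≠ 0) : Polynomial.degreeLT F (n + 1) ≤ S := by
  intro r hr
  rw [Polynomial.mem_degreeLT, Polynomial.degree_lt_iff_coeff_zero] at hr
  have hlead : q.coeff n ≠ 0 := by simpa [← hqn] using hq0
  have hlow : r - (r.coeff n / q.coeff n) • q ∈ Polynomial.degreeLT F n := by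
    rw [Polynomial.mem_degreeLT, Polynomial.degree_lt_iff_coeff_zero]
    intro k hk
    rcases hk.eq_or_lt with rfl | hk
    · simp [hlead]
    · simp [hr k hk, Polynomial.coeff_eq_zero_of_natDegree_lt (hqn.trans_lt hk)]
  simpa using S.add_mem (hS hlow) (S.smul_mem (r.coeff n / q.coeff n) hq)

lemma degreeLT_natDegree_succ_le_of_derivative_mem [CharP F p]
    (hS : ∀ q ∈ S, q.derivative ∈ S) {q : F[X]} (hq : q ∈ S) (hq0 : q ≠ 0) (hqp : q.natDegree < p) :
    Polynomial.degreeLT F (q.natDegree + 1) ≤ S := by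
  induction hn : q.natDegree generalizing q with
  | zero =>
    have hbot : Polynomial.degreeLT F 0 ≤ S := fun r hr ↦ by
      rw [Polynomial.mem_degreeLT, Nat.cast_zero,
        Nat.WithBot.lt_zero_iff, Polynomial.degree_eq_bot] at hr
      exact hr ▸ S.zero_mem
    exact degreeLT_succ_le_of_mem hbot hq hn hq0
  | succ n ih =>
    have hlead : q.derivative.coeff n ≠ 0 := by
      rw [Polynomial.coeff_derivative, ← Nat.cast_succ]
      exact mul_ne_zero (hn ▸ Polynomial.leadingCoeff_ne_zero.mpr hq0)
        (natCast_ne_zero_of_lt_char n.succ_ne_zero (hn.symm.trans_lt hqp))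
    have hdeg : q.derivative.natDegree = n :=
      le_antisymm (by simpa [hn] using q.natDegree_derivative_le)
        (Polynomial.le_natDegree_of_ne_zero hlead)
    exact degreeLT_succ_le_of_mem
      (ih (hS q hq) (fun h ↦ hlead (by simp [h])) (by omega) hdeg) hq hn hq0

namespace IsWittSubmodule

lemma X_pow_mem_of_X_pow_succ_mul_mem (hS : IsWittSubmodule p S) {b : F[X]} (hb : b ∈ S)
    (hb0 : b.coeff 0 ≠ 0) {n : ℕ} (hn : ((n + 1 : ℕ) : F) ≠ 0)
    (h : ∀ q, Polynomial.X ^ (n + 1) * q ∈ S) : Polynomial.X ^ n ∈ S := by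
  have hw : (((n + 1 : ℕ) : F) * b.coeff 0) • Polynomial.X ^ n
      = Polynomial.wronskian b (Polynomial.X ^ (n + 1)) - Polynomial.X ^ (n + 1) *
        (Polynomial.C ((n + 1 : ℕ) : F) * b.divX - b.derivative) := by
    rw [Polynomial.wronskian, Polynomial.derivative_X_pow, Polynomial.smul_eq_C_mul,
      Polynomial.C_mul, Nat.add_sub_cancel]
    linear_combination Polynomial.C ((n + 1 : ℕ) : F) * Polynomial.X ^ n * b.divX_mul_X_add
  refine (S.smul_mem_iff (mul_ne_zero hn hb0)).mp (hw ▸ S.sub_mem ?_ (h _))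
  exact hS.wronskian_mem hb (by simpa using h 1)

theorem eq_top_of_coeff_zero_ne_zero [CharP F p] (hS : IsWittSubmodule p S) {b : F[X]}
    (hb : b ∈ S) (hb0 : b.coeff 0 ≠ 0) (ht : Polynomial.X ^ (p - 1) ∈ S) : S = ⊤ := by
  have hmul : ∀ q, Polynomial.X ^ 0 * q ∈ S := by
    refine Nat.decreasingInduction (motive := fun n _ ↦ ∀ q, Polynomial.X ^ n * q ∈ S)
      (fun n _ ih ↦ X_pow_mul_mem_of_X_pow_mem ?_ ih) hS.X_pow_mul_mem p.zero_le
    rcases eq_or_ne (n + 1) p with hnp | hnp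
    · rwa [← hnp, Nat.add_sub_cancel] at ht
    · exact hS.X_pow_mem_of_X_pow_succ_mul_mem hb hb0
        (natCast_ne_zero_of_lt_char n.succ_ne_zero (by omega)) ih
  exact Submodule.eq_top_iff'.mpr fun q ↦ by simpa using hmul q

/-- With `e = (1 + cX)²` and `t = X ^ (p - 1)`, both `e` and `t` are eigenvectors of the bracket
with `X + cX²`, of eigenvalues `-1` and `-2`; so `e + t` yields `t`. -/
lemma eq_top_of_eigenvector_mem [CharP F p] (hp : p ≠ 0) (hS : IsWittSubmodule p S) (c : F)
    (hx : Polynomial.X + Polynomial.C c * Polynomial.X ^ 2 ∈ S)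
    (hy : (1 + Polynomial.C c * Polynomial.X) ^ 2 + Polynomial.X ^ (p - 1) ∈ S) : S = ⊤ := by
  set x := Polynomial.X + Polynomial.C c * Polynomial.X ^ 2
  set e := (1 + Polynomial.C c * Polynomial.X) ^ 2
  set t : F[X] := Polynomial.X ^ (p - 1)
  have hxy : t = -(Polynomial.wronskian x (e + t) + (e + t))
      - Polynomial.X ^ p * (3 * Polynomial.C c) := by
    have hXt : Polynomial.X * t = Polynomial.X ^ p := mul_pow_sub_one hp _
    have hdx : x.derivative = 1 + 2 * Polynomial.C c * Polynomial.X := by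
      simp [x]; ring
    have hde : e.derivative = 2 * Polynomial.C c * (1 + Polynomial.C c * Polynomial.X) := by
      simp [e, sq]; ring
    simp only [Polynomial.wronskian, map_add, hdx, hde, x, e]
    linear_combination (1 + Polynomial.C c * Polynomial.X) *
      X_mul_derivative_X_pow_sub_one (R := F) hp - 3 * Polynomial.C c * hXt
  have ht : t ∈ S := hxy ▸ S.sub_mem
    (S.neg_mem (S.add_mem (hS.wronskian_mem hx hy) hy)) (hS.X_pow_mul_mem _)
  exact hS.eq_top_of_coeff_zero_ne_zero (b := e) (by simpa using S.sub_mem hy ht)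
    (by simp [e, Polynomial.coeff_zero_eq_eval_zero]) ht

lemma derivative_mem (hS : IsWittSubmodule p S) (h1 : 1 ∈ S) {q : F[X]} (hq : q ∈ S) :
    q.derivative ∈ S := by
  simpa [Polynomial.wronskian] using hS.wronskian_mem h1 hq

lemma X_pow_succ_mem (hS : IsWittSubmodule p S) (h2 : (Polynomial.X ^ 2 : F[X]) ∈ S) {n : ℕ}
    (hn : (n : F) ≠ 2) (h : Polynomial.X ^ n ∈ S) : Polynomial.X ^ (n + 1) ∈ S := by
  exact (S.smul_mem_iff (sub_ne_zero.mpr hn)).mp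
    (wronskian_X_sq_X_pow (R := F) n ▸ hS.wronskian_mem h2 h)

theorem eq_top_of_three_le_natDegree [CharP F p] (hS : IsWittSubmodule p S) (h1 : 1 ∈ S)
    {b : F[X]} (hb : b ∈ S) (hb3 : 3 ≤ b.natDegree) (hbp : b.natDegree < p) : S = ⊤ := by
  have hlow : Polynomial.degreeLT F (b.natDegree + 1) ≤ S :=
    degreeLT_natDegree_succ_le_of_derivative_mem (fun _ ↦ hS.derivative_mem h1) hb
      (by rintro rfl; simp at hb3) hbp
  have hlow : ∀ k ≤ 3, (Polynomial.X ^ k : F[X]) ∈ S := fun k hk ↦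
    hlow (Polynomial.mem_degreeLT.mpr (by
      rw [Polynomial.degree_X_pow]; exact_mod_cast (show k < b.natDegree + 1 by omega)))
  refine hS.eq_top_of_coeff_zero_ne_zero h1 (by simp) ?_
  have hhigh : ∀ n, 3 ≤ n → n < p → (Polynomial.X ^ n : F[X]) ∈ S := by
    intro n hn
    induction n, hn using Nat.le_induction with
    | base => exact fun _ ↦ hlow 3 le_rfl
    | succ n hn ih =>
      refine fun hnp ↦ hS.X_pow_succ_mem (hlow 2 (by omega)) (fun h ↦ ?_) (ih (by omega))
      have hn2 : n = 2 := CharP.natCast_injOn_Iio F p (Set.mem_Iio.mpr (by omega))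
        (Set.mem_Iio.mpr (by omega)) (by simpa using h)
      omega
  exact hhigh _ (by omega) (by omega)

lemma eq_top_of_X_sq_mem [CharP F p] (hp : p ≠ 0) (h2 : (2 : F) ≠ 0) (hS : IsWittSubmodule p S)
    (hx : (Polynomial.X ^ 2 : F[X]) ∈ S) (hy : 1 + Polynomial.X ^ (p - 1) ∈ S) : S = ⊤ := by
  have hw : (-2 : F) • (Polynomial.X : F[X])
      = Polynomial.wronskian (Polynomial.X ^ 2) (1 + Polynomial.X ^ (p - 1))
        + Polynomial.X ^ p * 3 := by
    have hXt : Polynomial.X * Polynomial.X ^ (p - 1) = (Polynomial.X ^ p : F[X]) :=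
      mul_pow_sub_one hp _
    rw [Polynomial.wronskian, Polynomial.derivative_X_sq, map_add, Polynomial.derivative_one,
      Polynomial.smul_eq_C_mul, map_neg, map_ofNat]
    linear_combination 3 * hXt - Polynomial.X * X_mul_derivative_X_pow_sub_one (R := F) hp
  have hX : Polynomial.X ∈ S := (S.smul_mem_iff (neg_ne_zero.mpr h2)).mp
    (hw ▸ S.add_mem (hS.wronskian_mem hx hy) (hS.X_pow_mul_mem _))
  exact hS.eq_top_of_eigenvector_mem hp 0 (by simpa using hX) (by simpa using hy)

end IsWittSubmodule

theorem exists_forall_isWittSubmodule_eq_top [CharP F p] {b : F[X]} (hb : b ≠ 0)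
    (hbp : b.natDegree < p) :
    ∃ y : F[X], ∀ S : Submodule F F[X], IsWittSubmodule p S → b ∈ S → y ∈ S → S = ⊤ := by
  by_cases hb0 : b.coeff 0 ≠ 0
  · exact ⟨Polynomial.X ^ (p - 1), fun S hS hbS ↦ hS.eq_top_of_coeff_zero_ne_zero hbS hb0⟩
  by_cases hb3 : 3 ≤ b.natDegree
  · exact ⟨1, fun S hS hbS h1 ↦ hS.eq_top_of_three_le_natDegree h1 hbS hb3 hbp⟩
  have hp : p ≠ 0 := by omega
  have hquad : b = Polynomial.C (b.coeff 2) * Polynomial.X ^ 2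
      + Polynomial.C (b.coeff 1) * Polynomial.X := by
    simpa [not_not.mp hb0] using Polynomial.eq_quadratic_of_degree_le_two
      (Polynomial.degree_le_of_natDegree_le (show b.natDegree ≤ 2 by omega))
  by_cases hb1 : b.coeff 1 = 0
  · have hb2 : b.coeff 2 ≠ 0 := fun h ↦ hb (by simpa [hb1, h] using hquad)
    have h2 : (2 : F) ≠ 0 := mod_cast natCast_ne_zero_of_lt_char (R := F) two_ne_zero
      ((Polynomial.le_natDegree_of_ne_zero hb2).trans_lt hbp)
    have hb' : b.coeff 2 • Polynomial.X ^ 2 = b := by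
      simpa [hb1, Polynomial.smul_eq_C_mul] using hquad.symm
    exact ⟨1 + Polynomial.X ^ (p - 1), fun S hS hbS hy ↦
      hS.eq_top_of_X_sq_mem hp h2 ((S.smul_mem_iff hb2).mp (by rwa [hb'])) hy⟩
  · set c := b.coeff 2 / b.coeff 1 with hc
    have hb' : b.coeff 1 • (Polynomial.X + Polynomial.C c * Polynomial.X ^ 2) = b := by
      have hb2 : Polynomial.C (b.coeff 1) * Polynomial.C c = Polynomial.C (b.coeff 2) := by
        rw [← Polynomial.C_mul, hc, mul_div_cancel₀ _ hb1]
      rw [Polynomial.smul_eq_C_mul]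
      linear_combination Polynomial.X ^ 2 * hb2 - hquad
    exact ⟨(1 + Polynomial.C c * Polynomial.X) ^ 2 + Polynomial.X ^ (p - 1), fun S hS hbS hy ↦
      hS.eq_top_of_eigenvector_mem hp c ((S.smul_mem_iff hb1).mp (by rwa [hb'])) hy⟩

end WronskianClosedSubmodules

section WittMap

variable {F B : Type*} [Field F] [CommRing B] [Algebra F B] {ξ : B} {D : Derivation F B B}

/-- The map `q ↦ q(ξ)D` presenting `B D` as a quotient of the algebra `W(1)` of polynomial vector
fields on the line, when `B` is generated by `ξ`. -/
noncomputable def wittMap (ξ : B) (D : Derivation F B B) : F[X] →ₗ[F] Derivation F B B :=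
  ((LinearMap.toSpanSingleton B _ D).restrictScalars F).comp (Polynomial.aeval ξ).toLinearMap

@[simp]
lemma wittMap_apply (q : F[X]) : wittMap ξ D q = Polynomial.aeval ξ q • D := rfl

lemma lie_wittMap (hD : D ξ = 1) (q r : F[X]) :
    ⁅wittMap ξ D q, wittMap ξ D r⁆ = wittMap ξ D (Polynomial.wronskian q r) := by
  ext b
  simp only [wittMap_apply, Derivation.commutator_apply, Derivation.smul_apply, smul_eq_mul,
    Derivation.leibniz, Derivation.map_aeval, hD, Polynomial.wronskian, map_sub, map_mul,
    Derivation.sub_apply]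
  ring

lemma exists_wittMap_eq (hadj : Algebra.adjoin F {ξ} = ⊤) (hD : D ξ = 1) (E : Derivation F B B) :
    ∃ q, wittMap ξ D q = E := by
  obtain ⟨q, hq⟩ : E ξ ∈ (Polynomial.aeval (R := F) ξ).range := by
    rw [← Algebra.adjoin_singleton_eq_range_aeval, hadj]; trivial
  refine ⟨q, Derivation.ext_of_adjoin_eq_top _ hadj ?_⟩
  rw [Set.eqOn_singleton, wittMap_apply, Derivation.smul_apply, hD, smul_eq_mul, mul_one]
  exact hq

lemma isWittSubmodule_comap_wittMap {p : ℕ} (hξ : ξ ^ p = 0) (hD : D ξ = 1)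
    (K : LieSubalgebra F (Derivation F B B)) :
    IsWittSubmodule p (K.toSubmodule.comap (wittMap ξ D)) where
  X_pow_mul_mem q := by simp [hξ]
  wronskian_mem hq hr := by
    rw [Submodule.mem_comap, ← lie_wittMap hD]
    exact K.lie_mem hq hr

theorem exists_lieSpan_pair_eq_top {p : ℕ} [CharP F p] (hp : p ≠ 0)
    (hadj : Algebra.adjoin F {ξ} = ⊤) (hξ : ξ ^ p = 0) (hD : D ξ = 1) {x : Derivation F B B}
    (hx : x ≠ 0) : ∃ y, LieSubalgebra.lieSpan F (Derivation F B B) {x, y} = ⊤ := by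
  obtain ⟨q, rfl⟩ := exists_wittMap_eq hadj hD x
  set b := q %ₘ Polynomial.X ^ p
  have hbq : wittMap ξ D b = wittMap ξ D q := by
    conv_rhs => rw [← Polynomial.modByMonic_add_div q (Polynomial.X ^ p)]
    simp [b, hξ]
  rw [← hbq] at hx ⊢
  have hbp : b.natDegree < p := by
    simpa using Polynomial.natDegree_modByMonic_lt q (Polynomial.monic_X_pow p)
      (fun h ↦ hp (by simpa using congrArg Polynomial.natDegree h))
  obtain ⟨y, hy⟩ := exists_forall_isWittSubmodule_eq_top (fun h ↦ hx (by rw [h, map_zero])) hbp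
  refine ⟨wittMap ξ D y, eq_top_iff.mpr fun E _ ↦ ?_⟩
  obtain ⟨r, rfl⟩ := exists_wittMap_eq hadj hD E
  have htop := hy _ (isWittSubmodule_comap_wittMap hξ hD
    (LieSubalgebra.lieSpan F _ {wittMap ξ D b, wittMap ξ D y}))
    (LieSubalgebra.subset_lieSpan (by simp)) (LieSubalgebra.subset_lieSpan (by simp))
  exact (htop.symm ▸ Submodule.mem_top : r ∈ Submodule.comap (wittMap ξ D) _)

end WittMap

section CyclicFunctionals

variable {F V : Type*} [Field F] [AddCommGroup V] [Module F V]

lemma exists_dual_comp_aeval_eq [FiniteDimensional F V] {Y : Module.End F V}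
    {ε : Module.Dual F V} (h : ∀ v, (∀ n, ε ((Y ^ n) v) = 0) → v = 0) (φ : Module.Dual F V) :
    ∃ q : F[X], ε ∘ₗ Polynomial.aeval Y q = φ := by
  let evalAtY : F[X] →ₗ[F] Module.Dual F V :=
    (LinearMap.llcomp F V V F ε) ∘ₗ (Polynomial.aeval Y).toLinearMap
  have hbot : evalAtY.range.dualCoannihilator = ⊥ := by
    refine (Submodule.eq_bot_iff _).mpr fun v hv ↦ h v fun n ↦ ?_
    rw [Submodule.mem_dualCoannihilator] at hv
    simpa [evalAtY] using hv _ (LinearMap.mem_range_self evalAtY (Polynomial.X ^ n))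
  have htop : evalAtY.range = ⊤ := by
    rw [← Subspace.dualCoannihilator_dualAnnihilator_eq (W := evalAtY.range), hbot,
      Submodule.dualAnnihilator_bot]
  exact LinearMap.range_eq_top.mp htop φ

end CyclicFunctionals

section DerivationPairs

variable {F B : Type*} [Field F] [CommRing B] [Algebra F B]

/-- The largest ideal inside the kernel of `ε` that is stable under the derivation `y`. -/
def invariantCore (ε : B →ₐ[F] F) (y : Derivation F B B) : Ideal B where
  carrier := {b | ∀ n, ε (y^[n] b) = 0}
  zero_mem' n := by rw [Function.iterate_fixed (map_zero y), map_zero]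
  add_mem' ha hb n := by rw [iterate_map_add, map_add, ha, hb, add_zero]
  smul_mem' a b hb n := by
    induction n generalizing a b with
    | zero => simpa using Or.inr (hb 0)
    | succ n ih =>
      rw [Function.iterate_succ_apply, smul_eq_mul, Derivation.leibniz, iterate_map_add, map_add,
        ih a (y b) fun k ↦ hb (k + 1), smul_eq_mul, mul_comm, ← smul_eq_mul, ih (y a) b hb,
        add_zero]

variable {ε : B →ₐ[F] F} {y D : Derivation F B B}

lemma mem_invariantCore {b : B} : b ∈ invariantCore ε y ↔ ∀ n, ε (y^[n] b) = 0 := Iff.rfl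

lemma apply_mem_invariantCore {b : B} (hb : b ∈ invariantCore ε y) : y b ∈ invariantCore ε y :=
  fun n ↦ hb (n + 1)

lemma invariantCore_ne_top : invariantCore ε y ≠ ⊤ := fun h ↦ by
  simpa using mem_invariantCore.mp ((Ideal.eq_top_iff_one _).mp h) 0

/-- The functional `ε ∘ δ` equals `ε ∘ q(y)` for a polynomial `q`, and then `q(y)` is the required
derivation: its failure to satisfy the Leibniz rule generates a `y`-stable subspace of `ker ε`. -/
theorem exists_commuting_derivation [FiniteDimensional F B] (h : invariantCore ε y = ⊥)
    (δ : Derivation F B B) : ∃ D : Derivation F B B, ⁅y, D⁆ = 0 ∧ ∀ b, ε (D b) = ε (δ b) := by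
  obtain ⟨q, hq⟩ := exists_dual_comp_aeval_eq (Y := (y : B →ₗ[F] B)) (ε := ε.toLinearMap)
    (fun b hb ↦ (Submodule.eq_bot_iff _).mp h b fun n ↦ by simpa [Module.End.pow_apply] using hb n)
    (ε.toLinearMap ∘ₗ (δ : B →ₗ[F] B))
  set T : Module.End F B := Polynomial.aeval (y : B →ₗ[F] B) q
  have hεT : ∀ b, ε (T b) = ε (δ b) := LinearMap.congr_fun hq
  have hyT : ∀ b, y (T b) = T (y b) := by
    have hcomm := (Polynomial.commute_X q).map (Polynomial.aeval (y : B →ₗ[F] B))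
    rw [Polynomial.aeval_X] at hcomm
    exact LinearMap.congr_fun hcomm.eq
  have hleib : ∀ n a b, ε (y^[n] (T (a * b) - (a * T b + b * T a))) = 0 := by
    intro n
    induction n with
    | zero =>
      intro a b
      simp [hεT]
    | succ n ih =>
      intro a b
      have hy : y (T (a * b) - (a * T b + b * T a))
          = (T (y a * b) - (y a * T b + b * T (y a)))
            + (T (a * y b) - (a * T (y b) + y b * T a)) := by
        simp only [map_sub, map_add, hyT, Derivation.leibniz, smul_eq_mul]
        rw [mul_comm b (y a)]
        ring
      rw [Function.iterate_succ_apply, hy, iterate_map_add, map_add, ih, ih, add_zero]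
  refine ⟨Derivation.mk' T fun a b ↦ sub_eq_zero.mp ?_, Derivation.ext fun b ↦ ?_, hεT⟩
  · exact (Submodule.eq_bot_iff _).mp h _ fun n ↦ hleib n a b
  · simp [Derivation.commutator_apply, hyT]

lemma lie_smul_add_smul (hD : ⁅y, D⁆ = 0) (c c' : F) (b b' : B) :
    ⁅c • y + b • D, c' • y + b' • D⁆ = (c • y b' - c' • y b + (b * D b' - b' * D b)) • D := by
  ext x
  have hyD : y (D x) = D (y x) := sub_eq_zero.mp (DFunLike.congr_fun hD x)
  simp only [Derivation.commutator_apply, Derivation.add_apply, Derivation.smul_apply, map_add,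
    Derivation.leibniz, Derivation.map_algebraMap, hyD, smul_eq_mul, Algebra.smul_def]
  ring

/-- The Lie algebra `F y + B D` of derivations, for commuting derivations `y` and `D`. -/
def commutingPairSubalgebra (hD : ⁅y, D⁆ = 0) : LieSubalgebra F (Derivation F B B) where
  carrier := {E | ∃ (c : F) (b : B), c • y + b • D = E}
  zero_mem' := ⟨0, 0, by simp⟩
  add_mem' := by
    rintro _ _ ⟨c, b, rfl⟩ ⟨c', b', rfl⟩
    exact ⟨c + c', b + b', by module⟩
  smul_mem' := by
    rintro a _ ⟨c, b, rfl⟩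
    exact ⟨a * c, a • b, by simp [mul_smul, smul_assoc]⟩
  lie_mem' := by
    rintro _ _ ⟨c, b, rfl⟩ ⟨c', b', rfl⟩
    exact ⟨0, _, by rw [zero_smul, zero_add, lie_smul_add_smul hD]⟩

lemma mem_commutingPairSubalgebra {hD : ⁅y, D⁆ = 0} {E : Derivation F B B} :
    E ∈ commutingPairSubalgebra hD ↔ ∃ (c : F) (b : B), c • y + b • D = E := Iff.rfl

/-- Every commutator lies in `B D`, in particular `δ₀ = ⁅δ₀, ξ₀ δ₀⁆` and `δ₁ = ⁅δ₁, ξ₁ δ₁⁆`, but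
the evaluations of two elements of `B D` at `ξ₀, ξ₁` are proportional. -/
lemma commutingPairSubalgebra_ne_top [Nontrivial B] (hD : ⁅y, D⁆ = 0) {δ₀ δ₁ : Derivation F B B}
    {ξ₀ ξ₁ : B} (h₀₀ : δ₀ ξ₀ = 1) (h₀₁ : δ₀ ξ₁ = 0) (h₁₁ : δ₁ ξ₁ = 1) :
    commutingPairSubalgebra hD ≠ ⊤ := by
  intro htop
  have hcomm : ∀ {δ : Derivation F B B} {ξ : B}, δ ξ = 1 → ∃ b : B, δ = b • D := by
    intro δ ξ hδ
    obtain ⟨c, b, hb⟩ := mem_commutingPairSubalgebra.mp (htop ▸ LieSubalgebra.mem_top δ)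
    obtain ⟨c', b', hb'⟩ := mem_commutingPairSubalgebra.mp (htop ▸ LieSubalgebra.mem_top (ξ • δ))
    have hlie : ⁅δ, ξ • δ⁆ = δ := by simp [hδ]
    exact ⟨_, by rw [← hlie, ← hb', ← hb, lie_smul_add_smul hD]⟩
  obtain ⟨b₀, rfl⟩ := hcomm h₀₀
  obtain ⟨b₁, rfl⟩ := hcomm h₁₁
  simp only [Derivation.smul_apply, smul_eq_mul] at h₀₀ h₀₁ h₁₁
  refine one_ne_zero (α := B) ?_
  linear_combination -h₁₁ * (b₀ * D ξ₀) - h₀₀ + b₁ * D ξ₀ * h₀₁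

/-- The Lie algebra of derivations stabilizing the ideal `I`. -/
def idealStabilizer (F : Type*) {B : Type*} [Field F] [CommRing B] [Algebra F B] (I : Ideal B) :
    LieSubalgebra F (Derivation F B B) where
  carrier := {E | ∀ b ∈ I, E b ∈ I}
  zero_mem' _ _ := I.zero_mem
  add_mem' hD hE b hb := I.add_mem (hD b hb) (hE b hb)
  smul_mem' c E hE b hb := by
    rw [Derivation.smul_apply, Algebra.smul_def]
    exact I.mul_mem_left _ (hE b hb)
  lie_mem' hD hE b hb := I.sub_mem (hD _ (hE b hb)) (hE _ (hD b hb))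

lemma mem_idealStabilizer {I : Ideal B} {E : Derivation F B B} :
    E ∈ idealStabilizer F I ↔ ∀ b ∈ I, E b ∈ I := Iff.rfl

theorem lieSpan_smul_pair_ne_top [FiniteDimensional F B] {f : B}
    (hf : ∀ b, f * b = ε b • f) (hf_mem : ∀ I : Ideal B, I ≠ ⊥ → f ∈ I)
    (hsimple : ∀ I : Ideal B, I ≠ ⊥ → idealStabilizer F I = ⊤ → I = ⊤)
    {δ₀ δ₁ : Derivation F B B} {ξ₀ ξ₁ : B} (h₀₀ : δ₀ ξ₀ = 1) (h₀₁ : δ₀ ξ₁ = 0) (h₁₁ : δ₁ ξ₁ = 1)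
    (y : Derivation F B B) :
    LieSubalgebra.lieSpan F (Derivation F B B) {f • δ₀, y} ≠ ⊤ := by
  have : Nontrivial B := ε.toRingHom.domain_nontrivial
  refine fun htop ↦ ?_
  by_cases hcore : invariantCore ε y = ⊥
  · obtain ⟨D, hD, hεD⟩ := exists_commuting_derivation hcore δ₀
    have hfD : f • δ₀ = f • D := by
      ext b
      simp only [Derivation.smul_apply, smul_eq_mul, hf, hεD]
    refine commutingPairSubalgebra_ne_top hD h₀₀ h₀₁ h₁₁ (top_le_iff.mp (htop ▸ ?_))
    rw [LieSubalgebra.lieSpan_le, Set.pair_subset_iff]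
    exact ⟨⟨0, f, by simp [hfD]⟩, ⟨1, 0, by simp⟩⟩
  · refine invariantCore_ne_top (hsimple _ hcore (top_le_iff.mp (htop ▸ ?_)))
    rw [LieSubalgebra.lieSpan_le, Set.pair_subset_iff]
    exact ⟨fun b _ ↦ Ideal.mul_mem_right _ _ (hf_mem _ hcore), fun b ↦ apply_mem_invariantCore⟩

end DerivationPairs

namespace TruncPoly

variable {F : Type} [Field F] {p m : ℕ}

/-- The quotient map from `F[X_1, …, X_m]` onto the truncated polynomial algebra. -/
noncomputable def mk : MvPolynomial (Fin m) F →ₐ[F] TruncPoly F p m :=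
  Ideal.Quotient.mkₐ F _

lemma mk_surjective : Function.Surjective (mk : MvPolynomial (Fin m) F →ₐ[F] TruncPoly F p m) :=
  Ideal.Quotient.mkₐ_surjective F _

lemma mk_eq_zero_iff_forall_support {q : MvPolynomial (Fin m) F} :
    (mk q : TruncPoly F p m) = 0 ↔ ∀ s ∈ q.support, ∃ i, p ≤ s i := by
  have hspan : Set.range (fun i : Fin m ↦ (X i : MvPolynomial (Fin m) F) ^ p)
      = (fun s ↦ monomial s 1) '' Set.range fun i ↦ Finsupp.single i p := by
    rw [← Set.range_comp]
    simp only [X_pow_eq_monomial, Function.comp_def]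
  rw [mk, Ideal.Quotient.mkₐ_eq_mk, Ideal.Quotient.eq_zero_iff_mem, hspan,
    mem_ideal_span_monomial_image]
  simp only [Set.exists_range_iff, Finsupp.single_le_iff]

/-- The exponent `(p - 1, …, p - 1)` of the highest nonzero monomial. -/
noncomputable def topExponent (p m : ℕ) : Fin m →₀ ℕ :=
  Finsupp.equivFunOnFinite.symm fun _ ↦ p - 1

lemma le_topExponent_iff {s : Fin m →₀ ℕ} : s ≤ topExponent p m ↔ ∀ i, s i ≤ p - 1 := Iff.rfl

lemma mk_eq_zero_iff (hp : p ≠ 0) {q : MvPolynomial (Fin m) F} :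
    (mk q : TruncPoly F p m) = 0 ↔ ∀ s ≤ topExponent p m, coeff s q = 0 := by
  rw [mk_eq_zero_iff_forall_support]
  refine forall_congr' fun s ↦ ?_
  have htop : s ≤ topExponent p m ↔ ¬∃ i, p ≤ s i := by
    rw [le_topExponent_iff, not_exists]
    exact forall_congr' fun i ↦ by omega
  rw [htop, mem_support_iff, not_imp_comm]

section Generators

/-- The image of the variable `X_i`. -/
noncomputable def var (p : ℕ) (i : Fin m) : TruncPoly F p m := mk (X i)

lemma var_pow (i : Fin m) : (var p i : TruncPoly F p m) ^ p = 0 := by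
  rw [var, ← map_pow]
  exact Ideal.Quotient.eq_zero_iff_mem.mpr (Ideal.subset_span ⟨i, rfl⟩)

lemma adjoin_range_var :
    Algebra.adjoin F (Set.range (var p : Fin m → TruncPoly F p m)) = ⊤ := by
  have hrange : Set.range (var p : Fin m → TruncPoly F p m) = mk '' Set.range X := by
    rw [← Set.range_comp]; rfl
  rw [hrange, ← AlgHom.map_adjoin, MvPolynomial.adjoin_range_X, Algebra.map_top,
    AlgHom.range_eq_top]
  exact mk_surjective

lemma adjoin_singleton_var [Unique (Fin m)] (i : Fin m) :
    Algebra.adjoin F {var p i} = (⊤ : Subalgebra F (TruncPoly F p m)) := by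
  have hrange : Set.range (var p : Fin m → TruncPoly F p m) = {var p i} := by
    rw [Set.range_unique, Subsingleton.elim default i]
  exact hrange ▸ adjoin_range_var

lemma finiteDimensional (hp : p ≠ 0) : FiniteDimensional F (TruncPoly F p m) := by
  have hfin := Algebra.finite_adjoin_of_finite_of_isIntegral (R := F)
    (Set.finite_range (var p : Fin m → TruncPoly F p m)) (by
      rintro _ ⟨i, rfl⟩
      exact .of_pow (Nat.pos_of_ne_zero hp) (var_pow (F := F) (p := p) i ▸ isIntegral_zero))
  rw [adjoin_range_var] at hfin
  exact Module.Finite.equiv (Subalgebra.topEquiv (R := F) (A := TruncPoly F p m)).toLinearEquiv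

end Generators

/-- Evaluation at the origin. -/
noncomputable def augmentation (hp : p ≠ 0) : TruncPoly F p m →ₐ[F] F :=
  Ideal.Quotient.liftₐ _ (aeval fun _ ↦ 0) fun q hq ↦ by
    have hle : Ideal.span (Set.range fun i : Fin m ↦ (X i : MvPolynomial (Fin m) F) ^ p)
        ≤ RingHom.ker (aeval (fun _ ↦ 0) : MvPolynomial (Fin m) F →ₐ[F] F) := by
      rw [Ideal.span_le]
      rintro _ ⟨i, rfl⟩
      simp [hp]
    exact hle hq

lemma augmentation_mk (hp : p ≠ 0) (q : MvPolynomial (Fin m) F) :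
    augmentation hp (mk q : TruncPoly F p m) = coeff 0 q := by
  exact (aeval_zero' q).trans (congrFun constantCoeff_eq q)

/-- The product of the `X_i ^ (p - 1)`, which spans the socle of `B_m`. -/
noncomputable def socleGenerator (F : Type) [Field F] (p m : ℕ) : TruncPoly F p m :=
  mk (monomial (topExponent p m) 1)

lemma socleGenerator_ne_zero (hp : p ≠ 0) : socleGenerator F p m ≠ 0 := fun h ↦ by
  simpa using (mk_eq_zero_iff hp).mp h _ le_rfl

lemma mk_monomial_mul_mk (hp : p ≠ 0) {s : Fin m →₀ ℕ} {q : MvPolynomial (Fin m) F}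
    (hs : s ≤ topExponent p m) (hq : ∀ t < s, coeff t q = 0) :
    mk (monomial (topExponent p m - s) 1) * mk q = coeff s q • socleGenerator F p m := by
  rw [socleGenerator, ← map_mul, ← map_smul, ← sub_eq_zero, ← map_sub, mk_eq_zero_iff hp]
  intro u hu
  rw [coeff_sub, coeff_smul, coeff_monomial, coeff_monomial_mul', one_mul]
  rcases eq_or_ne (topExponent p m) u with rfl | hne
  · simp [tsub_tsub_cancel_of_le hs]
  · rw [if_neg hne, smul_zero, sub_zero, ite_eq_right_iff]
    intro hle
    have hule : u - (topExponent p m - s) ≤ s := by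
      rw [tsub_le_iff_left, tsub_add_cancel_of_le hs]
      exact hu
    refine hq _ (hule.lt_of_ne fun h ↦ hne ?_)
    rw [← tsub_add_cancel_of_le hle, h, add_tsub_cancel_of_le hs]

lemma socleGenerator_mul (hp : p ≠ 0) (b : TruncPoly F p m) :
    socleGenerator F p m * b = augmentation hp b • socleGenerator F p m := by
  obtain ⟨q, rfl⟩ := mk_surjective b
  rw [augmentation_mk, ← mk_monomial_mul_mk hp zero_le (fun t ht ↦ absurd ht not_lt_zero),
    tsub_zero]
  rfl

lemma socleGenerator_mem_of_ne_bot (hp : p ≠ 0) {I : Ideal (TruncPoly F p m)} (hI : I ≠ ⊥) :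
    socleGenerator F p m ∈ I := by
  obtain ⟨b, hb, hb0⟩ := Submodule.exists_mem_ne_zero_of_ne_bot hI
  obtain ⟨q, rfl⟩ := mk_surjective b
  have hex : ∃ s, s ≤ topExponent p m ∧ coeff s q ≠ 0 := by
    simpa [mk_eq_zero_iff hp] using hb0
  obtain ⟨s, ⟨hs, hqs⟩, hmin⟩ := exists_minimal_of_wellFoundedLT _ hex
  have hlow : ∀ t < s, coeff t q = 0 := fun t ht ↦ by
    by_contra hqt
    exact ht.not_ge (hmin ⟨ht.le.trans hs, hqt⟩ ht.le)
  refine ((I.restrictScalars F).smul_mem_iff hqs).mp ?_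
  rw [← mk_monomial_mul_mk hp hs hlow]
  exact I.mul_mem_left _ hb

section PartialDerivatives

variable [CharP F p]

lemma mk_pderiv_eq_zero (i : Fin m) {q : MvPolynomial (Fin m) F}
    (hq : (mk q : TruncPoly F p m) = 0) : (mk (pderiv i q) : TruncPoly F p m) = 0 := by
  rw [mk_eq_zero_iff_forall_support] at hq ⊢
  intro s hs
  rw [mem_support_iff, coeff_pderiv] at hs
  obtain ⟨j, hj⟩ := hq _ (mem_support_iff.mpr (left_ne_zero_of_mul hs))
  refine ⟨j, ?_⟩
  by_contra! hsj
  obtain rfl : i = j := by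
    by_contra hne
    rw [Finsupp.add_apply, Finsupp.single_eq_of_ne' hne, add_zero] at hj
    omega
  rw [Finsupp.add_apply, Finsupp.single_eq_same] at hj
  have hsi : s i + 1 = p := by omega
  exact right_ne_zero_of_mul hs (by exact_mod_cast hsi ▸ CharP.cast_eq_zero F p)

/-- The derivation `∂/∂X_i` of `B_m`. -/
noncomputable def partialDeriv (p : ℕ) [CharP F p] (i : Fin m) :
    Derivation F (TruncPoly F p m) (TruncPoly F p m) :=
  Derivation.liftOfSurjective mk_surjective fun _ ↦ mk_pderiv_eq_zero i

lemma partialDeriv_mk (i : Fin m) (q : MvPolynomial (Fin m) F) :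
    partialDeriv p i (mk q) = mk (pderiv i q) :=
  Derivation.liftOfSurjective_apply mk_surjective (fun _ ↦ mk_pderiv_eq_zero i) q

lemma partialDeriv_var_self (i : Fin m) : partialDeriv p i (var p i) = (1 : TruncPoly F p m) := by
  rw [var, partialDeriv_mk, pderiv_X_self, map_one]

lemma smul_partialDeriv_ne_zero (i : Fin m) {b : TruncPoly F p m} (hb : b ≠ 0) :
    b • partialDeriv (F := F) p i ≠ 0 := fun h ↦ hb <| by
  simpa [partialDeriv_var_self] using DFunLike.congr_fun h (var (F := F) p i)

lemma partialDeriv_var_of_ne {i j : Fin m} (h : j ≠ i) :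
    partialDeriv p i (var p j) = (0 : TruncPoly F p m) := by
  rw [var, partialDeriv_mk, pderiv_X_of_ne h, map_zero]

lemma one_mem_of_mk_monomial_mem {I : Ideal (TruncPoly F p m)}
    (hI : ∀ i, ∀ b ∈ I, partialDeriv p i b ∈ I) {s : Fin m →₀ ℕ} (hs : ∀ i, s i < p)
    (hmem : mk (monomial s 1) ∈ I) : 1 ∈ I := by
  induction s using WellFoundedLT.induction with
  | ind s ih =>
    rcases eq_or_ne s 0 with rfl | hs0
    · simpa using hmem
    · obtain ⟨i, hi⟩ := Finsupp.ne_iff.mp hs0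
      have hle : s - Finsupp.single i 1 ≤ s := tsub_le_self
      have hlt : s - Finsupp.single i 1 < s := hle.lt_of_ne fun h ↦ hi (by
        have hsi : s i - 1 = s i := by simpa using DFunLike.congr_fun h i
        rw [Finsupp.coe_zero, Pi.zero_apply]
        omega)
      have hlow := hI i _ hmem
      rw [partialDeriv_mk, pderiv_monomial, one_mul, ← mul_one (s i : F), ← smul_eq_mul,
        ← smul_monomial, map_smul] at hlow
      exact ih _ hlt (fun j ↦ (hle j).trans_lt (hs j))
        (((I.restrictScalars F).smul_mem_iff (natCast_ne_zero_of_lt_char hi (hs i))).mp hlow)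

lemma eq_top_of_idealStabilizer_eq_top (hp : p ≠ 0) {I : Ideal (TruncPoly F p m)} (hI : I ≠ ⊥)
    (hstab : idealStabilizer F I = ⊤) : I = ⊤ := by
  rw [Ideal.eq_top_iff_one]
  refine one_mem_of_mk_monomial_mem (s := topExponent p m) (fun i ↦ ?_) (fun _ ↦ ?_)
    (socleGenerator_mem_of_ne_bot hp hI)
  · exact mem_idealStabilizer.mp (hstab ▸ LieSubalgebra.mem_top _)
  · exact Nat.sub_one_lt hp

end PartialDerivatives

end TruncPoly

theorem wittAlgebra_one_and_a_half_iff_m_eq_one_general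
    (p : ℕ) (hp : p.Prime) (F : Type) [Field F] [CharP F p] (m : ℕ) (hm : 1 ≤ m) :
    (∀ x : Derivation F (TruncPoly F p m) (TruncPoly F p m), x ≠ 0 →
        ∃ y : Derivation F (TruncPoly F p m) (TruncPoly F p m),
          LieSubalgebra.lieSpan F (Derivation F (TruncPoly F p m) (TruncPoly F p m)) {x, y}
            = ⊤) ↔
      m = 1 := by
  constructor
  · intro h
    by_contra hm1
    obtain ⟨i, j, hij⟩ : ∃ i j : Fin m, i ≠ j := ⟨⟨0, by omega⟩, ⟨1, by omega⟩, by simp⟩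
    obtain ⟨y, hy⟩ := h _ <| TruncPoly.smul_partialDeriv_ne_zero i <|
      TruncPoly.socleGenerator_ne_zero hp.ne_zero
    have := TruncPoly.finiteDimensional (F := F) (m := m) hp.ne_zero
    exact lieSpan_smul_pair_ne_top (TruncPoly.socleGenerator_mul hp.ne_zero)
      (fun _ ↦ TruncPoly.socleGenerator_mem_of_ne_bot hp.ne_zero)
      (fun _ ↦ TruncPoly.eq_top_of_idealStabilizer_eq_top hp.ne_zero)
      (TruncPoly.partialDeriv_var_self i) (TruncPoly.partialDeriv_var_of_ne hij.symm)
      (TruncPoly.partialDeriv_var_self j) y hy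
  · rintro rfl x hx
    exact exists_lieSpan_pair_eq_top hp.ne_zero (TruncPoly.adjoin_singleton_var 0)
      (TruncPoly.var_pow 0) (TruncPoly.partialDeriv_var_self 0) hx

/-- The Witt algebra `W(m,1) = Der_F(B_m)` over an algebraically closed field of
characteristic `p > 3` is generated by one and a half elements if and only if `m = 1`. -/
theorem wittAlgebra_one_and_a_half_iff_m_eq_one
    (p : ℕ) (hp : p.Prime) (hp3 : 3 < p)
    (F : Type) [Field F] [IsAlgClosed F] [CharP F p] (m : ℕ) (hm : 1 ≤ m) :
    (∀ x : Derivation F (TruncPoly F p m) (TruncPoly F p m), x ≠ 0 →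
        ∃ y : Derivation F (TruncPoly F p m) (TruncPoly F p m),
          LieSubalgebra.lieSpan F (Derivation F (TruncPoly F p m) (TruncPoly F p m)) {x, y}
            = ⊤) ↔
      m = 1 :=
  wittAlgebra_one_and_a_half_iff_m_eq_one_general p hp F m hm
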